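/- arXiv:1810.00517 — 2 statements merged into one kernel-verified Lean document; each statement's English description precedes it below -/
import Mathlib

section
/- Fix integers 1 ≤ r ≤ d. Let S_d ∈ ℝ^{d×d} be symmetric positive semidefinite, and suppose the POD basis is L²-orthonormal, so that the mass matrix is the identity: take M = I_r, N ∈ ℝ^{r×d} with N_{ij} = 1 if i = j and 0 otherwise, S ∈ ℝ^{r×r} with S_{ij} = (S_d)_{ij} for 1 ≤ i,j ≤ r, and S' ∈ ℝ^{r×d} with S'_{ij} = (S_d)_{ij} for 1 ≤ i ≤ r, 1 ≤ j ≤ d. Then for every a_d ∈ ℝ^d, the vectors b_r and c_r determined by a_r = N a_d, b_r = -S a_r, and c_r = -S' a_d satisfy, for each 1 ≤ i ≤ r: (b_r - c_r)_i = Σ_{j=r+1}^{d} (S_d)_{ij} (a_d)_j. In particular, the projection-filter Laplacian commutation error vanishes for all a_d if and only if (S_d)_{ij} = 0 for all 1 ≤ i ≤ r and r < j ≤ d. -/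
open Finset

/-!
Since `N` truncates to the first `r` coordinates, `S (N a)` is the part of the sum
`(S' a) i = ∑ j, S_d i j * a j` over `j < r`, so the commutation error `S' a - S (N a)` is the
remaining tail `r ≤ j`. Evaluating it at unit vectors shows that it vanishes for every `a` only if
all the entries `S_d i j` with `i < r ≤ j` vanish.
-/

theorem sum_fin_split {r d : ℕ} (hrd : r ≤ d) (f : Fin d → ℝ) :
    ∑ j, f j = ∑ i : Fin r, f (Fin.castLE hrd i)
      + ∑ j ∈ Finset.univ.filter (fun j : Fin d => r ≤ (j : ℕ)), f j := by
  obtain ⟨k, rfl⟩ := Nat.exists_eq_add_of_le hrd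
  rw [Finset.sum_filter, Fin.sum_univ_add, Fin.sum_univ_add]
  have h : ∀ i : Fin r, ¬ r ≤ (i : ℕ) := fun i => not_le.mpr i.isLt
  simp [h, Fin.castAdd]

/-- projection filter with an L²-orthonormal POD basis (mass matrix the
identity): explicit formula for the Laplacian commutation error, and vanishing
characterization. -/
theorem stmt7 {r d : ℕ} (hr : 1 ≤ r) (hrd : r ≤ d)
    (S_d : Matrix (Fin d) (Fin d) ℝ) (hSd : S_d.PosSemidef)
    (N : Matrix (Fin r) (Fin d) ℝ)
    (hN : ∀ (i : Fin r) (j : Fin d), N i j = if (i : ℕ) = (j : ℕ) then 1 else 0)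
    (S : Matrix (Fin r) (Fin r) ℝ)
    (hS : ∀ i j : Fin r, S i j = S_d (Fin.castLE hrd i) (Fin.castLE hrd j))
    (S' : Matrix (Fin r) (Fin d) ℝ)
    (hS' : ∀ (i : Fin r) (j : Fin d), S' i j = S_d (Fin.castLE hrd i) j) :
    (∀ (a_d : Fin d → ℝ) (a_r b_r c_r : Fin r → ℝ),
        a_r = N.mulVec a_d →
        b_r = -(S.mulVec a_r) →
        c_r = -(S'.mulVec a_d) →
        ∀ i : Fin r, (b_r - c_r) i =
          ∑ j ∈ Finset.univ.filter (fun j : Fin d => r ≤ (j : ℕ)),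
            S_d (Fin.castLE hrd i) j * a_d j)
    ∧ ((∀ (a_d : Fin d → ℝ) (a_r b_r c_r : Fin r → ℝ),
        a_r = N.mulVec a_d →
        b_r = -(S.mulVec a_r) →
        c_r = -(S'.mulVec a_d) →
        b_r = c_r)
      ↔ ∀ (i : Fin r) (j : Fin d), r ≤ (j : ℕ) → S_d (Fin.castLE hrd i) j = 0) := by
  have hNa : ∀ (a : Fin d → ℝ) (i : Fin r), N.mulVec a i = a (Fin.castLE hrd i) := by
    intro a i
    rw [Matrix.mulVec, dotProduct, Finset.sum_eq_single (Fin.castLE hrd i)]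
    · simp [hN]
    · intro j _ hj
      have : (i : ℕ) ≠ (j : ℕ) := fun h => hj (Fin.ext h.symm)
      simp [hN, this]
    · simp
  have key : ∀ (a_d : Fin d → ℝ) (a_r b_r c_r : Fin r → ℝ),
      a_r = N.mulVec a_d → b_r = -(S.mulVec a_r) → c_r = -(S'.mulVec a_d) →
      ∀ i : Fin r, (b_r - c_r) i =
        ∑ j ∈ Finset.univ.filter (fun j : Fin d => r ≤ (j : ℕ)),
          S_d (Fin.castLE hrd i) j * a_d j := by
    rintro a _ _ _ rfl rfl rfl i
    have h := sum_fin_split hrd (fun j => S_d (Fin.castLE hrd i) j * a j)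
    simp only [Pi.sub_apply, Pi.neg_apply, Matrix.mulVec, dotProduct, hS, hS'] at hNa ⊢
    simp only [hNa]
    linarith
  refine ⟨key, fun h i j hj => ?_, ?_⟩
  · -- Testing against the `j`-th unit vector isolates the entry `S_d i j`.
    have h1 := key (Pi.single j 1) _ _ _ rfl rfl rfl i
    rw [h (Pi.single j 1) _ _ _ rfl rfl rfl, sub_self,
      Finset.sum_eq_single_of_mem j (by simpa using hj)
        (fun k _ hk => by simp [hk])] at h1
    simpa using h1.symm
  · intro h a_d a_r b_r c_r h1 h2 h3
    funext i
    rw [← sub_eq_zero, ← Pi.sub_apply, key a_d a_r b_r c_r h1 h2 h3 i]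
    refine Finset.sum_eq_zero fun j hj => ?_
    rw [h i j (by simpa using hj), zero_mul]
end

section
/- Fix an integer r ≥ 1 and δ ∈ ℝ. Let M ∈ ℝ^{r×r} be symmetric positive definite and S ∈ ℝ^{r×r} symmetric positive semidefinite. In the case r = d (i.e., with N = M and S' = S), for every a_d ∈ ℝʳ, the vectors b_r and c_r determined by (M + δ²S) a_r = M a_d, M b_r = -S a_r, and (M + δ²S) c_r = -S a_d satisfy b_r = c_r. That is, the Laplacian commutation error of the ROM differential filter vanishes when the ROM dimension r equals the rank d of the snapshot matrix. -/
/-!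
Write `A = M + δ²S`. Both `M` and `A` are positive definite, hence injective. The equations for
`a_r` and `b_r` give `a_d = a_r - δ² b_r`, so `-S a_d = M b_r + δ² S b_r = A b_r`, and injectivity
of `A` yields `b_r = c_r`. No commutation of `M` and `S` is needed.
-/


/-- differential filter, the Laplacian commutation error vanishes when
the ROM dimension `r` equals the rank `d` of the snapshot matrix (i.e. `N = M`,
`S' = S`). -/
theorem stmt10 {r : ℕ} (hr : 1 ≤ r) (δ : ℝ)
    (M S : Matrix (Fin r) (Fin r) ℝ) (hM : M.PosDef) (hS : S.PosSemidef) :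
    ∀ (a_d a_r b_r c_r : Fin r → ℝ),
      (M + δ ^ 2 • S).mulVec a_r = M.mulVec a_d →
      M.mulVec b_r = -(S.mulVec a_r) →
      (M + δ ^ 2 • S).mulVec c_r = -(S.mulVec a_d) →
      b_r = c_r := by
  intro a_d a_r b_r c_r ha hb hc
  have hMinj := Matrix.mulVec_injective_of_isUnit hM.isUnit
  have hAinj := Matrix.mulVec_injective_of_isUnit
    (hM.add_posSemidef (hS.smul (sq_nonneg δ))).isUnit
  -- Substituting `S a_r = -M b_r` into the filter equation and cancelling `M`
  -- recovers `a_d` from the filtered data.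
  have had : a_d = a_r - δ ^ 2 • b_r := by
    apply hMinj
    change M.mulVec a_d = M.mulVec (a_r - δ ^ 2 • b_r)
    rw [← ha, Matrix.mulVec_sub, Matrix.mulVec_smul, hb, Matrix.add_mulVec, Matrix.smul_mulVec,
      smul_neg, sub_neg_eq_add]
  -- Hence `-S a_d = M b_r + δ² S b_r`: `b_r` solves the system that determines `c_r`.
  apply hAinj
  change (M + δ ^ 2 • S).mulVec b_r = (M + δ ^ 2 • S).mulVec c_r
  rw [hc, had, Matrix.mulVec_sub, Matrix.mulVec_smul, Matrix.add_mulVec, Matrix.smul_mulVec, hb]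
  abel
end
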